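/- Fix ν > 0 and h ∈ [0, 1), set θ_h := arcsin h, and define G : ℝ → ℝ by G(x) := (2ν/π)·∫₀^∞ t·e^{−t|x|·cos θ_h} / (ν²t²cos²θ_h + 4(t² − 1)²) dt. Then G is positive, even, bounded, integrable on ℝ, continuous on ℝ and infinitely differentiable on ℝ \ {0}, and for every k ∈ ℝ its Fourier transform satisfies ∫_ℝ e^{−ikx} G(x) dx = 1 / (k² + (ν/2)·cos²θ_h·|k| + cos²θ_h). -/

import Mathlib

/-!
Up to a factor and a dilation by `cos θ_h`, `G` is a mixture `x ↦ ∫ e^{-t|x|} dμ(t)` of two-sided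
exponentials against a finite measure `μ` on `(0, ∞)`. Such a mixture is positive, even, bounded and
continuous, and it is smooth away from `0` because the moment generating function of `μ` is analytic
on the negative half-line. By Fubini its integrability reduces to that of `1/t` against `μ`, and its
Fourier transform is `∫ 2t / (t² + k²) dμ(t)`.

That rational integral has no antiderivative that is uniform in the parameters: partial fractions
degenerate when `k² - b|k| + 1 = 0`. Instead, adding the integrand to its image under the inversion
`t ↦ 1/t` makes it a function of `u = t - 1/t` times `du`, which leaves
`∫ du / ((u² + a²) (u² + b²))` over the whole line. Applied once more with `t ↦ ab/t`, the same
Cauchy–Schlömilch substitution turns this integral into the elementary `∫ du / (u² + (a + b)²)`.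
-/

open MeasureTheory Real Filter Set
open scoped ENNReal Topology

/-- The fundamental solution of the linearized Néel wall operator
`L = -d²/dx² + (ν/2) cos²θ_h (-d²/dx²)^{1/2} + cos²θ_h`, with `θ_h = arcsin h`. -/
noncomputable def Gfun (ν h : ℝ) (x : ℝ) : ℝ :=
  2 * ν / Real.pi *
    ∫ t in Set.Ioi (0 : ℝ),
      t * Real.exp (-t * |x| * Real.cos (Real.arcsin h)) /
        (ν ^ 2 * t ^ 2 * Real.cos (Real.arcsin h) ^ 2 + 4 * (t ^ 2 - 1) ^ 2)

section Inversion

variable {c : ℝ}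

lemma image_const_div_Ioi (hc : 0 < c) : (c / ·) '' Ioi (0 : ℝ) = Ioi 0 := by
  refine Subset.antisymm (image_subset_iff.2 fun t ht ↦ div_pos hc ht) fun t ht ↦ ?_
  exact ⟨c / t, div_pos hc ht, div_div_cancel₀ hc.ne'⟩

lemma injective_const_div (hc : c ≠ 0) : Function.Injective (c / · : ℝ → ℝ) := fun s t h ↦ by
  simpa [div_eq_mul_inv, hc] using h

lemma hasDerivAt_const_div {t : ℝ} (ht : t ≠ 0) : HasDerivAt (c / ·) (-(c / t ^ 2)) t := by
  simpa [div_eq_mul_inv] using (hasDerivAt_inv ht).const_mul c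

lemma abs_neg_div_sq (hc : 0 ≤ c) (t : ℝ) : |-(c / t ^ 2)| = c / t ^ 2 := by
  rw [abs_neg, abs_of_nonneg (by positivity)]

variable {E : Type*} [NormedAddCommGroup E] [NormedSpace ℝ E]

lemma integral_Ioi_comp_const_div (hc : 0 < c) (f : ℝ → E) :
    ∫ t in Ioi (0 : ℝ), (c / t ^ 2) • f (c / t) = ∫ t in Ioi (0 : ℝ), f t := by
  have h := integral_image_eq_integral_abs_deriv_smul measurableSet_Ioi
    (fun t ht ↦ (hasDerivAt_const_div (c := c) (ne_of_gt ht)).hasDerivWithinAt)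
    (injective_const_div hc.ne').injOn f
  simpa only [image_const_div_Ioi hc, abs_neg_div_sq hc.le] using h.symm

lemma integrableOn_Ioi_comp_const_div (hc : 0 < c) {f : ℝ → E} (hf : IntegrableOn f (Ioi 0)) :
    IntegrableOn (fun t ↦ (c / t ^ 2) • f (c / t)) (Ioi 0) := by
  have h := integrableOn_image_iff_integrableOn_abs_deriv_smul measurableSet_Ioi
    (fun t ht ↦ (hasDerivAt_const_div (c := c) (ne_of_gt ht)).hasDerivWithinAt)
    (injective_const_div hc.ne').injOn f
  simpa only [abs_neg_div_sq hc.le] using h.1 (by rwa [image_const_div_Ioi hc])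

lemma strictMonoOn_sub_const_div (hc : 0 < c) : StrictMonoOn (fun t ↦ t - c / t) (Ioi 0) :=
  fun _ hs _ _ hst ↦ sub_lt_sub hst (div_lt_div_of_pos_left hc hs hst)

lemma image_sub_const_div_Ioi (hc : 0 < c) : (fun t ↦ t - c / t) '' Ioi 0 = univ := by
  refine eq_univ_of_forall fun u ↦ ?_
  have hsq : √(u ^ 2 + 4 * c) ^ 2 = u ^ 2 + 4 * c := sq_sqrt (by positivity)
  have hlt : |u| < √(u ^ 2 + 4 * c) := lt_sqrt_of_sq_lt (by rw [sq_abs]; linarith)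
  have hpos : 0 < u + √(u ^ 2 + 4 * c) := by linarith [neg_abs_le u]
  refine ⟨(u + √(u ^ 2 + 4 * c)) / 2, half_pos hpos, ?_⟩
  field_simp
  linear_combination hsq

lemma integral_Ioi_comp_sub_const_div (hc : 0 < c) (f : ℝ → E) :
    ∫ t in Ioi (0 : ℝ), (1 + c / t ^ 2) • f (t - c / t) = ∫ u, f u := by
  have hderiv : ∀ t ∈ Ioi (0 : ℝ),
      HasDerivWithinAt (fun t ↦ t - c / t) (1 + c / t ^ 2) (Ioi 0) t := fun t ht ↦ by
    simpa using ((hasDerivAt_id' t).fun_sub (hasDerivAt_const_div (ne_of_gt ht))).hasDerivWithinAt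
  have h := integral_image_eq_integral_abs_deriv_smul measurableSet_Ioi hderiv
    (strictMonoOn_sub_const_div hc).injOn f
  rw [image_sub_const_div_Ioi hc, setIntegral_univ] at h
  refine (h.trans <| setIntegral_congr_fun measurableSet_Ioi fun t _ ↦ ?_).symm
  simp only [abs_of_nonneg (show 0 ≤ 1 + c / t ^ 2 by positivity)]

lemma two_smul_integral_Ioi_of_add_inversion (hc : 0 < c) {f g : ℝ → E}
    (hg : IntegrableOn g (Ioi 0))
    (hgf : ∀ t, 0 < t → g t + (c / t ^ 2) • g (c / t) = (1 + c / t ^ 2) • f (t - c / t)) :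
    (2 : ℝ) • ∫ t in Ioi (0 : ℝ), g t = ∫ u, f u :=
  calc (2 : ℝ) • ∫ t in Ioi (0 : ℝ), g t
      = (∫ t in Ioi (0 : ℝ), g t) + ∫ t in Ioi (0 : ℝ), (c / t ^ 2) • g (c / t) := by
        rw [integral_Ioi_comp_const_div hc, two_smul]
    _ = ∫ t in Ioi (0 : ℝ), (g t + (c / t ^ 2) • g (c / t)) :=
        (integral_add hg (integrableOn_Ioi_comp_const_div hc hg)).symm
    _ = ∫ t in Ioi (0 : ℝ), (1 + c / t ^ 2) • f (t - c / t) :=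
        setIntegral_congr_fun measurableSet_Ioi hgf
    _ = ∫ u, f u := integral_Ioi_comp_sub_const_div hc f

end Inversion

section Lorentzian

variable {a b κ : ℝ}

lemma inv_sq_add_sq_eq (ha : a ≠ 0) (u : ℝ) :
    (u ^ 2 + a ^ 2)⁻¹ = (a ^ 2)⁻¹ * (1 + (u / a) ^ 2)⁻¹ := by
  rw [← mul_inv]
  congr 1
  field_simp
  ring

lemma integrable_inv_sq_add_sq (ha : a ≠ 0) : Integrable fun u : ℝ ↦ (u ^ 2 + a ^ 2)⁻¹ := by
  simpa only [inv_sq_add_sq_eq ha] using (integrable_inv_one_add_sq.comp_div ha).const_mul _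

lemma integral_univ_inv_sq_add_sq (ha : 0 < a) : ∫ u : ℝ, (u ^ 2 + a ^ 2)⁻¹ = π / a := by
  simp only [inv_sq_add_sq_eq ha.ne', integral_const_mul]
  rw [Measure.integral_comp_div (fun u ↦ (1 + u ^ 2)⁻¹), integral_univ_inv_one_add_sq,
    abs_of_pos ha, smul_eq_mul]
  field_simp

lemma integrable_inv_sq_add_sq_mul_sq_add_sq (ha : a ≠ 0) (hb : b ≠ 0) :
    Integrable fun u : ℝ ↦ ((u ^ 2 + a ^ 2) * (u ^ 2 + b ^ 2))⁻¹ := by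
  refine ((integrable_inv_sq_add_sq ha).mul_const (b ^ 2)⁻¹).mono'
    (by fun_prop) (ae_of_all _ fun u ↦ ?_)
  rw [norm_of_nonneg (by positivity), mul_inv]
  gcongr
  exact le_add_of_nonneg_left (sq_nonneg u)

lemma integral_inv_sq_add_sq_mul_sq_add_sq (ha : 0 < a) (hb : 0 < b) :
    ∫ u : ℝ, ((u ^ 2 + a ^ 2) * (u ^ 2 + b ^ 2))⁻¹ = π / (a * b * (a + b)) := by
  let g : ℝ → ℝ := fun u ↦ ((u ^ 2 + a ^ 2) * (u ^ 2 + b ^ 2))⁻¹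
  have heven : ∫ u, g u = 2 * ∫ u in Ioi (0 : ℝ), g u := by
    simpa only [g, sq_abs] using integral_comp_abs (f := g)
  have hinv : ∀ t, 0 < t → g t + (a * b / t ^ 2) • g (a * b / t) =
      (1 + a * b / t ^ 2) • ((a * b)⁻¹ * ((t - a * b / t) ^ 2 + (a + b) ^ 2)⁻¹) := by
    intro t ht
    have hquad : (t - a * b / t) ^ 2 + (a + b) ^ 2 = (t ^ 2 + a ^ 2) * (t ^ 2 + b ^ 2) / t ^ 2 := by
      field_simp
      ring
    simp only [g, hquad, smul_eq_mul]
    field_simp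
    ring
  have h := two_smul_integral_Ioi_of_add_inversion (mul_pos ha hb) (g := g)
    (f := fun u ↦ (a * b)⁻¹ * (u ^ 2 + (a + b) ^ 2)⁻¹)
    (integrable_inv_sq_add_sq_mul_sq_add_sq ha.ne' hb.ne').integrableOn hinv
  rw [heven, ← smul_eq_mul, h, integral_const_mul, integral_univ_inv_sq_add_sq (add_pos ha hb)]
  field_simp

lemma integral_inv_mul_sq_add_sq_mul_sq_add_sq (hκ : 0 ≤ κ) (ha : 0 < a) (hb : 0 < b) :
    ∫ u : ℝ, ((κ ^ 2 * u ^ 2 + a ^ 2) * (u ^ 2 + b ^ 2))⁻¹ = π / (a * b * (a + κ * b)) := by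
  obtain rfl | hκ := hκ.eq_or_lt
  · simp only [zero_pow two_ne_zero, zero_mul, zero_add, mul_inv, integral_const_mul,
      integral_univ_inv_sq_add_sq hb]
    field_simp
    simp
  · have hscale : ∀ u : ℝ, ((κ ^ 2 * u ^ 2 + a ^ 2) * (u ^ 2 + b ^ 2))⁻¹ =
        (κ ^ 2)⁻¹ * ((u ^ 2 + (a / κ) ^ 2) * (u ^ 2 + b ^ 2))⁻¹ := fun u ↦ by
      rw [← mul_inv]
      congr 1
      field_simp
    simp only [hscale, integral_const_mul, integral_inv_sq_add_sq_mul_sq_add_sq (div_pos ha hκ) hb]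
    field_simp

end Lorentzian

lemma integral_cexp_mul_comp_mul_left (f : ℝ → ℂ) {c : ℝ} (hc : c ≠ 0) (k : ℝ) :
    ∫ x : ℝ, Complex.exp (-Complex.I * k * x) * f (c * x) =
      (|c⁻¹| : ℝ) * ∫ y : ℝ, Complex.exp (-Complex.I * (k / c : ℝ) * y) * f y := by
  rw [← Complex.real_smul, ← Measure.integral_comp_mul_left]
  congr with x
  congr 2
  have hc : (c : ℂ) ≠ 0 := mod_cast hc
  push_cast
  field_simp

section TwoSidedExponential

variable {a : ℝ}

lemma integrable_exp_neg_mul_abs (ha : 0 < a) : Integrable fun x : ℝ ↦ exp (-(a * |x|)) := by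
  rw [← integrableOn_univ, ← Iic_union_Ioi (a := 0), integrableOn_union]
  constructor
  · refine (integrableOn_exp_mul_Iic ha 0).congr_fun (fun x hx ↦ ?_) measurableSet_Iic
    simp only [abs_of_nonpos (mem_Iic.1 hx), mul_neg, neg_neg]
  · refine (integrableOn_exp_mul_Ioi (neg_lt_zero.2 ha) 0).congr_fun (fun x hx ↦ ?_)
      measurableSet_Ioi
    simp only [abs_of_pos (mem_Ioi.1 hx), neg_mul]

lemma integral_exp_neg_mul_abs (ha : 0 < a) : ∫ x : ℝ, exp (-(a * |x|)) = 2 * a⁻¹ := by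
  rw [integral_comp_abs (f := fun x ↦ exp (-(a * x)))]
  simp only [← neg_mul]
  rw [integral_exp_mul_Ioi (neg_lt_zero.2 ha)]
  simp

lemma integrable_cexp_mul_exp_neg_mul_abs (ha : 0 < a) (k : ℝ) :
    Integrable fun x : ℝ ↦ Complex.exp (-Complex.I * k * x) * (exp (-(a * |x|)) : ℝ) :=
  (integrable_exp_neg_mul_abs ha).ofReal.bdd_mul (c := 1) (by fun_prop)
    (ae_of_all _ fun x ↦ by simp [Complex.norm_exp])

lemma integral_Iic_cexp_mul_exp_neg_mul_abs (ha : 0 < a) (k : ℝ) :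
    ∫ x in Iic (0 : ℝ), Complex.exp (-Complex.I * k * x) * (exp (-(a * |x|)) : ℝ) =
      (a - Complex.I * k)⁻¹ := by
  have hre : 0 < (a - Complex.I * k : ℂ).re := by simpa
  have h : EqOn (fun x : ℝ ↦ Complex.exp (-Complex.I * k * x) * (exp (-(a * |x|)) : ℝ))
      (fun x : ℝ ↦ Complex.exp ((a - Complex.I * k) * x)) (Iic 0) := fun x hx ↦ by
    simp only [abs_of_nonpos (mem_Iic.1 hx), Complex.ofReal_exp, ← Complex.exp_add]
    push_cast
    ring_nf
  rw [setIntegral_congr_fun measurableSet_Iic h, integral_exp_mul_complex_Iic hre]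
  simp

lemma integral_Ioi_cexp_mul_exp_neg_mul_abs (ha : 0 < a) (k : ℝ) :
    ∫ x in Ioi (0 : ℝ), Complex.exp (-Complex.I * k * x) * (exp (-(a * |x|)) : ℝ) =
      (a + Complex.I * k)⁻¹ := by
  have hre : (-(a + Complex.I * k) : ℂ).re < 0 := by simpa
  have h : EqOn (fun x : ℝ ↦ Complex.exp (-Complex.I * k * x) * (exp (-(a * |x|)) : ℝ))
      (fun x : ℝ ↦ Complex.exp (-(a + Complex.I * k) * x)) (Ioi 0) := fun x hx ↦ by
    simp only [abs_of_pos (mem_Ioi.1 hx), Complex.ofReal_exp, ← Complex.exp_add]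
    push_cast
    ring_nf
  rw [setIntegral_congr_fun measurableSet_Ioi h, integral_exp_mul_complex_Ioi hre]
  rw [Complex.ofReal_zero, mul_zero, Complex.exp_zero, neg_div_neg_eq, one_div]

lemma integral_cexp_mul_exp_neg_mul_abs (ha : 0 < a) (k : ℝ) :
    ∫ x : ℝ, Complex.exp (-Complex.I * k * x) * (exp (-(a * |x|)) : ℝ) =
      ((2 * a / (a ^ 2 + k ^ 2) : ℝ) : ℂ) := by
  have hint := integrable_cexp_mul_exp_neg_mul_abs ha k
  have hsub : (a - Complex.I * k : ℂ) ≠ 0 := fun h ↦ by simpa [ha.ne'] using congrArg Complex.re h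
  have hadd : (a + Complex.I * k : ℂ) ≠ 0 := fun h ↦ by simpa [ha.ne'] using congrArg Complex.re h
  have hmul : (a ^ 2 + k ^ 2 : ℂ) = (a - Complex.I * k) * (a + Complex.I * k) := by
    linear_combination k ^ 2 * Complex.I_sq
  rw [← intervalIntegral.integral_Iic_add_Ioi hint.integrableOn hint.integrableOn,
    integral_Iic_cexp_mul_exp_neg_mul_abs ha, integral_Ioi_cexp_mul_exp_neg_mul_abs ha]
  push_cast
  rw [hmul]
  field_simp
  ring

end TwoSidedExponential

/-- The mixture of the two-sided exponentials `x ↦ e^{-t|x|}` with weight `μ`, i.e. the even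
extension of the Laplace transform of `μ`. It is meaningful for `μ` carried by `[0, ∞)`. -/
noncomputable def expMixture (μ : Measure ℝ) (x : ℝ) : ℝ :=
  ∫ t, exp (-(t * |x|)) ∂μ

namespace expMixture

open ProbabilityTheory

variable {μ : Measure ℝ}

lemma apply_neg (μ : Measure ℝ) (x : ℝ) : expMixture μ (-x) = expMixture μ x := by
  simp only [expMixture, abs_neg]

lemma eq_mgf (μ : Measure ℝ) : expMixture μ = fun x ↦ mgf id μ (-|x|) := by
  ext x
  simp only [expMixture, mgf, id, neg_mul, mul_comm |x|]

lemma ae_norm_exp_le_one (hμ : ∀ᵐ t ∂μ, 0 ≤ t) (x : ℝ) : ∀ᵐ t ∂μ, ‖exp (-(t * |x|))‖ ≤ 1 := by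
  filter_upwards [hμ] with t ht
  rw [norm_of_nonneg (exp_pos _).le, exp_le_one_iff]
  exact neg_nonpos.2 (by positivity)

section Finite

variable [IsFiniteMeasure μ]

lemma integrable_exp (hμ : ∀ᵐ t ∂μ, 0 ≤ t) (x : ℝ) : Integrable (fun t ↦ exp (-(t * |x|))) μ :=
  (integrable_const (1 : ℝ)).mono' (by fun_prop) (ae_norm_exp_le_one hμ x)

protected lemma pos [NeZero μ] (hμ : ∀ᵐ t ∂μ, 0 ≤ t) (x : ℝ) : 0 < expMixture μ x :=
  integral_exp_pos (integrable_exp hμ x)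

lemma abs_le (hμ : ∀ᵐ t ∂μ, 0 ≤ t) (x : ℝ) : |expMixture μ x| ≤ μ.real univ := by
  simpa [expMixture] using norm_integral_le_of_norm_le_const (ae_norm_exp_le_one hμ x)

protected lemma continuous (hμ : ∀ᵐ t ∂μ, 0 ≤ t) : Continuous (expMixture μ) :=
  continuous_of_dominated (fun _ ↦ by fun_prop) (ae_norm_exp_le_one hμ) (integrable_const 1)
    (ae_of_all _ fun _ ↦ by fun_prop)

lemma Iio_subset_interior_integrableExpSet (hμ : ∀ᵐ t ∂μ, 0 ≤ t) :
    Iio 0 ⊆ interior (integrableExpSet id μ) := by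
  refine interior_maximal (fun s hs ↦ ?_) isOpen_Iio
  simpa [integrableExpSet, abs_of_neg (mem_Iio.1 hs), mul_comm s] using integrable_exp hμ s

lemma contDiffAt (hμ : ∀ᵐ t ∂μ, 0 ≤ t) {x : ℝ} (hx : x ≠ 0) {n : ℕ∞} :
    ContDiffAt ℝ n (expMixture μ) x := by
  have hmgf : AnalyticAt ℝ (mgf id μ) (-|x|) :=
    analyticAt_mgf (Iio_subset_interior_integrableExpSet hμ (by simpa using hx))
  rw [eq_mgf]
  exact ContDiffAt.comp (g := mgf id μ) x hmgf.contDiffAt (contDiffAt_abs hx).neg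

end Finite

section Fourier

variable [SFinite μ]

lemma integrable_prod (hμ : ∀ᵐ t ∂μ, 0 < t) (hinv : Integrable (·⁻¹) μ) :
    Integrable (fun p : ℝ × ℝ ↦ exp (-(p.2 * |p.1|))) (volume.prod μ) := by
  rw [integrable_prod_iff' (by fun_prop)]
  refine ⟨hμ.mono fun t ht ↦ integrable_exp_neg_mul_abs ht, (hinv.const_mul 2).congr ?_⟩
  filter_upwards [hμ] with t ht
  simp only [norm_of_nonneg (exp_pos _).le, integral_exp_neg_mul_abs ht]

protected lemma integrable (hμ : ∀ᵐ t ∂μ, 0 < t) (hinv : Integrable (·⁻¹) μ) :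
    Integrable (expMixture μ) :=
  (integrable_prod hμ hinv).integral_prod_left

lemma integral_cexp_mul (hμ : ∀ᵐ t ∂μ, 0 < t) (hinv : Integrable (·⁻¹) μ) (k : ℝ) :
    ∫ x : ℝ, Complex.exp (-Complex.I * k * x) * expMixture μ x =
      ((∫ t, 2 * t / (t ^ 2 + k ^ 2) ∂μ : ℝ) : ℂ) := by
  have hint : Integrable (Function.uncurry fun x t : ℝ ↦
      Complex.exp (-Complex.I * k * x) * (exp (-(t * |x|)) : ℝ)) (volume.prod μ) := by
    refine (integrable_prod hμ hinv).ofReal.bdd_mul (c := 1) (by fun_prop) (ae_of_all _ fun p ↦ ?_)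
    simp [Complex.norm_exp]
  calc ∫ x : ℝ, Complex.exp (-Complex.I * k * x) * expMixture μ x
      = ∫ x : ℝ, ∫ t, Complex.exp (-Complex.I * k * x) * (exp (-(t * |x|)) : ℝ) ∂μ := by
        simp only [expMixture, integral_const_mul, integral_complex_ofReal]
    _ = ∫ t, (∫ x : ℝ, Complex.exp (-Complex.I * k * x) * (exp (-(t * |x|)) : ℝ)) ∂μ :=
        integral_integral_swap hint
    _ = ∫ t, ((2 * t / (t ^ 2 + k ^ 2) : ℝ) : ℂ) ∂μ :=
        integral_congr_ae <| hμ.mono fun t ht ↦ integral_cexp_mul_exp_neg_mul_abs ht k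
    _ = _ := integral_complex_ofReal

end Fourier

end expMixture

/-- The quartic in the denominator of the integrand of `Gfun`, divided by `4`; the parameter is
`b = (ν / 2) cos θ_h`. -/
def neelQuartic (b t : ℝ) : ℝ := b ^ 2 * t ^ 2 + (t ^ 2 - 1) ^ 2

section Quartic

variable {b κ : ℝ}

@[fun_prop]
lemma continuous_neelQuartic (b : ℝ) : Continuous (neelQuartic b) := by
  unfold neelQuartic
  fun_prop

lemma one_add_sq_sq_le_mul_neelQuartic (hb : b ≠ 0) (t : ℝ) :
    (1 + t ^ 2) ^ 2 ≤ (1 + 4 / b ^ 2) * neelQuartic b t := by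
  have h : (1 + 4 / b ^ 2) * neelQuartic b t =
      (1 + t ^ 2) ^ 2 + (b ^ 2 * t ^ 2 + 4 / b ^ 2 * (t ^ 2 - 1) ^ 2) := by
    unfold neelQuartic
    field_simp
    ring
  rw [h]
  exact le_add_of_nonneg_right (by positivity)

lemma neelQuartic_pos (hb : b ≠ 0) (t : ℝ) : 0 < neelQuartic b t :=
  pos_of_mul_pos_right ((by positivity : 0 < (1 + t ^ 2) ^ 2).trans_le
    (one_add_sq_sq_le_mul_neelQuartic hb t)) (by positivity)

lemma integrable_div_neelQuartic (hb : b ≠ 0) {f : ℝ → ℝ} (hf : Continuous f)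
    (hfb : ∀ t, |f t| ≤ 1 + t ^ 2) : Integrable fun t ↦ f t / neelQuartic b t := by
  have hpos := neelQuartic_pos hb
  refine (integrable_inv_one_add_sq.const_mul (1 + 4 / b ^ 2)).mono'
    (hf.div (by fun_prop) fun t ↦ (hpos t).ne').aestronglyMeasurable (ae_of_all _ fun t ↦ ?_)
  rw [norm_div, norm_of_nonneg (hpos t).le, div_le_iff₀ (hpos t)]
  calc |f t| ≤ 1 + t ^ 2 := hfb t
    _ = (1 + t ^ 2)⁻¹ * (1 + t ^ 2) ^ 2 := by field_simp
    _ ≤ (1 + t ^ 2)⁻¹ * ((1 + 4 / b ^ 2) * neelQuartic b t) := by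
        gcongr
        exact one_add_sq_sq_le_mul_neelQuartic hb t
    _ = (1 + 4 / b ^ 2) * (1 + t ^ 2)⁻¹ * neelQuartic b t := by ring

lemma integrable_inv_neelQuartic (hb : b ≠ 0) : Integrable fun t ↦ (neelQuartic b t)⁻¹ := by
  simpa using integrable_div_neelQuartic hb continuous_const (f := fun _ ↦ 1)
    fun t ↦ by simpa using sq_nonneg t

lemma integrable_id_div_neelQuartic (hb : b ≠ 0) : Integrable fun t ↦ t / neelQuartic b t :=
  integrable_div_neelQuartic hb continuous_id fun t ↦ by
    rw [← sq_abs]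
    nlinarith [sq_nonneg (|t| - 1), abs_nonneg t]

lemma integrableOn_sq_div_mul_neelQuartic (hb : b ≠ 0) (κ : ℝ) :
    IntegrableOn (fun t ↦ t ^ 2 / ((t ^ 2 + κ ^ 2) * neelQuartic b t)) (Ioi 0) := by
  refine (integrable_inv_neelQuartic hb).integrableOn.mono'
    (Measurable.aestronglyMeasurable (by fun_prop)) (ae_of_all _ fun t ↦ ?_)
  have hpos := neelQuartic_pos hb t
  rw [norm_of_nonneg (by positivity), ← div_div, div_eq_mul_inv _ (neelQuartic b t)]
  refine mul_le_of_le_one_left (by positivity) (div_le_one_of_le₀ ?_ (by positivity))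
  exact le_add_of_nonneg_right (sq_nonneg κ)

lemma neelQuartic_eq_sq_mul {t : ℝ} (ht : t ≠ 0) :
    neelQuartic b t = t ^ 2 * ((t - 1 / t) ^ 2 + b ^ 2) := by
  unfold neelQuartic
  field_simp
  ring

lemma integral_sq_div_mul_neelQuartic (hb : 0 < b) (hκ : 0 ≤ κ) :
    ∫ t in Ioi (0 : ℝ), t ^ 2 / ((t ^ 2 + κ ^ 2) * neelQuartic b t) =
      π / (2 * b * (κ ^ 2 + b * κ + 1)) := by
  have hinv : ∀ t, 0 < t → t ^ 2 / ((t ^ 2 + κ ^ 2) * neelQuartic b t) + (1 / t ^ 2) •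
      ((1 / t) ^ 2 / (((1 / t) ^ 2 + κ ^ 2) * neelQuartic b (1 / t))) =
      (1 + 1 / t ^ 2) • ((κ ^ 2 + 1) *
        ((κ ^ 2 * (t - 1 / t) ^ 2 + (κ ^ 2 + 1) ^ 2) * ((t - 1 / t) ^ 2 + b ^ 2))⁻¹) := by
    intro t ht
    have hquad : κ ^ 2 * (t - 1 / t) ^ 2 + (κ ^ 2 + 1) ^ 2 =
        (t ^ 2 + κ ^ 2) * ((1 / t) ^ 2 + κ ^ 2) := by
      field_simp
      ring
    have hu : (1 / t - 1 / (1 / t)) ^ 2 = (t - 1 / t) ^ 2 := by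
      rw [one_div_one_div, ← neg_sub, neg_sq]
    rw [neelQuartic_eq_sq_mul ht.ne', neelQuartic_eq_sq_mul (one_div_pos.2 ht).ne', hu, hquad]
    generalize (t - 1 / t) ^ 2 + b ^ 2 = w
    simp only [smul_eq_mul]
    field_simp
    ring
  have h := two_smul_integral_Ioi_of_add_inversion one_pos
    (f := fun u ↦ (κ ^ 2 + 1) * ((κ ^ 2 * u ^ 2 + (κ ^ 2 + 1) ^ 2) * (u ^ 2 + b ^ 2))⁻¹)
    (integrableOn_sq_div_mul_neelQuartic hb.ne' κ) hinv
  rw [integral_const_mul, integral_inv_mul_sq_add_sq_mul_sq_add_sq hκ (by positivity) hb,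
    smul_eq_mul] at h
  rw [eq_div_of_mul_eq two_ne_zero ((mul_comm _ _).trans h)]
  field_simp
  ring

end Quartic

/-- The mixing measure on `(0, ∞)`, with density `t / neelQuartic b t`, that represents `Gfun` as an
`expMixture` up to scaling. -/
noncomputable def neelMeasure (b : ℝ) : Measure ℝ :=
  (volume.restrict (Ioi 0)).withDensity fun t ↦ ENNReal.ofReal (t / neelQuartic b t)

namespace neelMeasure

variable {b : ℝ}

lemma measurable_density (b : ℝ) :
    Measurable fun t ↦ ENNReal.ofReal (t / neelQuartic b t) := by
  fun_prop

lemma ae_pos (b : ℝ) : ∀ᵐ t ∂neelMeasure b, 0 < t :=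
  (withDensity_absolutelyContinuous _ _).ae_le (ae_restrict_mem measurableSet_Ioi)

lemma isFiniteMeasure (hb : b ≠ 0) : IsFiniteMeasure (neelMeasure b) :=
  isFiniteMeasure_withDensity_ofReal (integrable_id_div_neelQuartic hb).integrableOn.2

lemma toReal_density (hb : b ≠ 0) {t : ℝ} (ht : 0 < t) :
    (ENNReal.ofReal (t / neelQuartic b t)).toReal = t / neelQuartic b t :=
  ENNReal.toReal_ofReal (div_pos ht (neelQuartic_pos hb t)).le

lemma integral_eq (hb : b ≠ 0) (f : ℝ → ℝ) :
    ∫ t, f t ∂neelMeasure b = ∫ t in Ioi (0 : ℝ), t / neelQuartic b t * f t := by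
  rw [neelMeasure, integral_withDensity_eq_integral_toReal_smul (measurable_density b)
    (ae_of_all _ fun _ ↦ ENNReal.ofReal_lt_top)]
  exact setIntegral_congr_fun measurableSet_Ioi fun t ht ↦ by
    simp only [toReal_density hb ht, smul_eq_mul]

lemma integrable_inv (hb : b ≠ 0) : Integrable (·⁻¹) (neelMeasure b) := by
  rw [neelMeasure, integrable_withDensity_iff_integrable_smul' (measurable_density b)
    (ae_of_all _ fun _ ↦ ENNReal.ofReal_lt_top)]
  refine (integrable_inv_neelQuartic hb).integrableOn.congr_fun (fun t ht ↦ ?_) measurableSet_Ioi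
  have ht : t ≠ 0 := ne_of_gt ht
  simp only [toReal_density hb ‹_›, smul_eq_mul]
  field_simp

lemma integral_two_mul_div (hb : 0 < b) (k : ℝ) :
    ∫ t, 2 * t / (t ^ 2 + k ^ 2) ∂neelMeasure b = π / (b * (k ^ 2 + b * |k| + 1)) := by
  have h : ∀ t : ℝ, t / neelQuartic b t * (2 * t / (t ^ 2 + k ^ 2)) =
      2 * (t ^ 2 / ((t ^ 2 + |k| ^ 2) * neelQuartic b t)) := fun t ↦ by
    rw [sq_abs, div_mul_div_comm, ← mul_div_assoc]
    ring
  simp only [integral_eq hb.ne', h, integral_const_mul]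
  rw [integral_sq_div_mul_neelQuartic hb (abs_nonneg k), sq_abs]
  field_simp

lemma neZero (hb : 0 < b) : NeZero (neelMeasure b) := by
  refine ⟨fun h ↦ ?_⟩
  have hint := integral_two_mul_div hb 0
  rw [h, integral_zero_measure] at hint
  exact (by positivity : 0 < π / (b * (0 ^ 2 + b * |0| + 1))).ne hint

end neelMeasure

section Gfun

variable {ν h : ℝ}

lemma cos_arcsin_pos (hh : h ∈ Ioo (-1) 1) : 0 < cos (arcsin h) :=
  cos_pos_of_mem_Ioo ⟨neg_pi_div_two_lt_arcsin.2 hh.1, arcsin_lt_pi_div_two.2 hh.2⟩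

lemma Gfun_eq_expMixture (hν : ν ≠ 0) (hc : 0 < cos (arcsin h)) :
    Gfun ν h = fun x ↦ ν / (2 * π) *
      expMixture (neelMeasure (ν / 2 * cos (arcsin h))) (cos (arcsin h) * x) := by
  ext x
  rw [Gfun, expMixture, neelMeasure.integral_eq (by positivity), ← integral_const_mul,
    ← integral_const_mul]
  congr with t
  have hquartic : ν ^ 2 * t ^ 2 * cos (arcsin h) ^ 2 + 4 * (t ^ 2 - 1) ^ 2 =
      4 * neelQuartic (ν / 2 * cos (arcsin h)) t := by
    unfold neelQuartic
    ring
  have hexp : -t * |x| * cos (arcsin h) = -(t * |cos (arcsin h) * x|) := by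
    rw [abs_mul, abs_of_pos hc]
    ring
  rw [hquartic, hexp]
  have := neelQuartic_pos (b := ν / 2 * cos (arcsin h)) (by positivity) t
  field_simp
  ring

lemma integral_cexp_mul_Gfun (hν : 0 < ν) (hc : 0 < cos (arcsin h)) (k : ℝ) :
    ∫ x : ℝ, Complex.exp (-Complex.I * k * x) * Gfun ν h x =
      ((k ^ 2 + ν / 2 * cos (arcsin h) ^ 2 * |k| + cos (arcsin h) ^ 2 : ℝ) : ℂ)⁻¹ := by
  rw [Gfun_eq_expMixture hν.ne' hc]
  set c := cos (arcsin h)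
  have hb : 0 < ν / 2 * c := by positivity
  have := neelMeasure.isFiniteMeasure hb.ne'
  have hcomm (x : ℝ) : Complex.exp (-Complex.I * k * x) *
      ((ν / (2 * π) * expMixture (neelMeasure (ν / 2 * c)) (c * x) : ℝ) : ℂ) =
      ((ν / (2 * π) : ℝ) : ℂ) * (Complex.exp (-Complex.I * k * x) *
        expMixture (neelMeasure (ν / 2 * c)) (c * x)) := by
    rw [Complex.ofReal_mul, mul_left_comm]
  simp only [hcomm, integral_const_mul]
  rw [integral_cexp_mul_comp_mul_left (fun y ↦ (expMixture (neelMeasure (ν / 2 * c)) y : ℂ)) hc.ne',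
    expMixture.integral_cexp_mul (neelMeasure.ae_pos _) (neelMeasure.integrable_inv hb.ne'),
    neelMeasure.integral_two_mul_div hb]
  norm_cast
  rw [abs_div, abs_inv, abs_of_pos hc]
  field_simp

end Gfun

theorem Gfun_properties_general (ν h : ℝ) (hν : 0 < ν) (hh : h ∈ Set.Ioo (-1 : ℝ) 1) :
    (∀ x : ℝ, 0 < Gfun ν h x) ∧
      (∀ x : ℝ, Gfun ν h (-x) = Gfun ν h x) ∧
      (∃ M : ℝ, ∀ x : ℝ, |Gfun ν h x| ≤ M) ∧
      Integrable (Gfun ν h) ∧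
      Continuous (Gfun ν h) ∧
      ContDiffOn ℝ (⊤ : ℕ∞) (Gfun ν h) {(0 : ℝ)}ᶜ ∧
      ∀ k : ℝ,
        (∫ x : ℝ, Complex.exp (-Complex.I * (k : ℂ) * (x : ℂ)) * (Gfun ν h x : ℂ))
          = ((k ^ 2 + ν / 2 * cos (arcsin h) ^ 2 * |k| + cos (arcsin h) ^ 2 : ℝ) : ℂ)⁻¹ := by
  have hc := cos_arcsin_pos hh
  set b := ν / 2 * cos (arcsin h)
  have hb : 0 < b := by positivity
  have hpos := neelMeasure.ae_pos b
  have hnonneg := hpos.mono fun _ ↦ le_of_lt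
  have := neelMeasure.isFiniteMeasure hb.ne'
  have := neelMeasure.neZero hb
  have hG : Gfun ν h = fun x ↦ ν / (2 * π) * expMixture (neelMeasure b) (cos (arcsin h) * x) :=
    Gfun_eq_expMixture hν.ne' hc
  refine ⟨fun x ↦ ?_, fun x ↦ ?_, ⟨ν / (2 * π) * (neelMeasure b).real univ, fun x ↦ ?_⟩, ?_, ?_,
    fun x hx ↦ ?_, integral_cexp_mul_Gfun hν hc⟩ <;> rw [hG]
  · exact mul_pos (by positivity) (expMixture.pos hnonneg _)
  · simp only [mul_neg, expMixture.apply_neg]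
  · rw [abs_mul, abs_of_pos (show 0 < ν / (2 * π) by positivity)]
    gcongr
    exact expMixture.abs_le hnonneg _
  · exact ((expMixture.integrable hpos (neelMeasure.integrable_inv hb.ne')).comp_mul_left'
      hc.ne').const_mul _
  · exact continuous_const.mul ((expMixture.continuous hnonneg).comp (continuous_const_mul _))
  · have hmix := expMixture.contDiffAt hnonneg (mul_ne_zero hc.ne' hx) (n := ⊤)
    exact (contDiffAt_const.mul (hmix.comp x (contDiffAt_const.mul contDiffAt_id))).contDiffWithinAt

/-- the fundamental solution `G` is positive, even, bounded, integrable,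
continuous, smooth away from the origin, and has the stated Fourier transform. -/
theorem Gfun_properties (ν h : ℝ) (hν : 0 < ν) (hh : h ∈ Set.Ico (0 : ℝ) 1) :
    (∀ x : ℝ, 0 < Gfun ν h x) ∧
      (∀ x : ℝ, Gfun ν h (-x) = Gfun ν h x) ∧
      (∃ M : ℝ, ∀ x : ℝ, |Gfun ν h x| ≤ M) ∧
      MeasureTheory.Integrable (Gfun ν h) ∧
      Continuous (Gfun ν h) ∧
      ContDiffOn ℝ (⊤ : ℕ∞) (Gfun ν h) {(0 : ℝ)}ᶜ ∧
      ∀ k : ℝ,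
        (∫ x : ℝ, Complex.exp (-Complex.I * (k : ℂ) * (x : ℂ)) * (Gfun ν h x : ℂ))
          = ((k ^ 2 + ν / 2 * Real.cos (Real.arcsin h) ^ 2 * |k|
              + Real.cos (Real.arcsin h) ^ 2 : ℝ) : ℂ)⁻¹ :=
  Gfun_properties_general ν h hν ⟨by linarith [hh.1], hh.2⟩
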